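/- Let P be a finite set with a partial order <, and let <' and <'' be two partial orders on P, each weaker than < (p <' q implies p < q, and p <'' q implies p < q), such that 𝒥 is closed under both *_{<'} and *_{<''}, and let P* ⊆ P contain all <-minimal and <-maximal elements with no p ∈ P* satisfying p <' q or p <'' q for any q ∈ P. Let λ ∈ ℤ^{P*} be a nonnegative dominant marking. Then for every integer m ≥ 0, the sets ℤ^P ∩ m·R_λ(P,<,<') and ℤ^P ∩ m·R_λ(P,<,<'') have the same cardinality. -/

import Mathlib

open Pointwise

/-- `J` is an order ideal (lower set) with respect to the strict order relation `r`. -/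
def IsLowerIdeal {P : Type*} (r : P → P → Prop) (J : Set P) : Prop :=
  ∀ ⦃p q : P⦄, r p q → q ∈ J → p ∈ J

/-- The set of `r`-maximal elements of `J`. -/
def maxElems {P : Type*} (r : P → P → Prop) (J : Set P) : Set P :=
  {p ∈ J | ∀ q ∈ J, ¬ r p q}

/-- The 0/1 indicator vector of `A ⊆ P`, as a point of `ℝ^P`. -/
noncomputable def ind {P : Type*} (A : Set P) : P → ℝ :=
  A.indicator 1

/-- The order ideal of `(P, r)` generated by `A`. -/
def genIdeal {P : Type*} (r : P → P → Prop) (A : Set P) : Set P :=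
  {p | ∃ q ∈ A, p = q ∨ r p q}

/-- The Hibi–Li operation `J1 *' J2` relative to the order `r`: the order ideal of `(P, r)`
generated by `(J1 ∩ J2) ∩ (max_r J1 ∪ max_r J2)`. -/
def starOp {P : Type*} (r : P → P → Prop) (J1 J2 : Set P) : Set P :=
  genIdeal r ((J1 ∩ J2) ∩ (maxElems r J1 ∪ maxElems r J2))

/-- The relative poset polytope `R(P, lt, lt')`: the convex hull of the points
`1_{max_{lt'} J}` over all order ideals `J` of `(P, lt)`. -/
noncomputable def RPP {P : Type*} (lt lt' : P → P → Prop) : Set (P → ℝ) :=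
  convexHull ℝ {x | ∃ J : Set P, IsLowerIdeal lt J ∧ x = ind (maxElems lt' J)}

/-- The dilation `m·Q = {m·x : x ∈ Q}`. -/
def dilate {P : Type*} (m : ℕ) (Q : Set (P → ℝ)) : Set (P → ℝ) :=
  (fun x => (m : ℝ) • x) '' Q

/-- The order polytope of `(P, lt)`. -/
def orderPolytope {P : Type*} (lt : P → P → Prop) : Set (P → ℝ) :=
  {x | (∀ p, 0 ≤ x p ∧ x p ≤ 1) ∧ ∀ p q, lt q p → x p ≤ x q}

/-- The chain polytope of `(P, lt)`. -/
def chainPolytope {P : Type*} (lt : P → P → Prop) : Set (P → ℝ) :=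
  {x | (∀ p, 0 ≤ x p) ∧ ∀ (k : ℕ) (c : Fin k → P),
    (∀ i j : Fin k, i < j → lt (c i) (c j)) → (∑ i, x (c i)) ≤ 1}


/-- The fundamental marked relative poset polytope `R_{ω_K}(P, lt, lt')`: the convex hull
of the points `1_{max_{lt'} J}` over order ideals `J` of `(P, lt)` with `J ∩ P* = K`. -/
noncomputable def RPPfund {P : Type*} (lt lt' : P → P → Prop) (Pstar K : Set P) :
    Set (P → ℝ) :=
  convexHull ℝ
    {x | ∃ J : Set P, IsLowerIdeal lt J ∧ J ∩ Pstar = K ∧ x = ind (maxElems lt' J)}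

/-- The set `𝒥*` of order ideals of the subposet `(P*, lt)`. -/
def idealsOn {P : Type*} (lt : P → P → Prop) (Pstar : Set P) : Set (Set P) :=
  {K | K ⊆ Pstar ∧ ∀ p q : P, p ∈ Pstar → q ∈ Pstar → lt p q → q ∈ K → p ∈ K}

/-- The marked relative poset polytope for a coefficient function `α : 𝒥* → ℕ`:
the Minkowski sum `Σ_{K ∈ 𝒥*} α_K · R_{ω_K}(P, lt, lt')`. -/
noncomputable def RPPmarked {P : Type*} [Fintype P] (lt lt' : P → P → Prop)
    (Pstar : Set P) (α : Set P → ℕ) : Set (P → ℝ) :=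
  ∑ K ∈ (Set.toFinite (idealsOn lt Pstar)).toFinset, dilate (α K) (RPPfund lt lt' Pstar K)



/-!
Let `r` be one of the two weaker orders. Expanding the Minkowski sum, a point of `R_λ(P, <, r)` is a
nonnegative combination `∑ c_J • 1_{max_r J}` in which the ideals with trace `K` on `P*` have total
weight `α_K`. Since `1_{max J₁} + 1_{max J₂} = 1_{max (J₁ ∪ J₂)} + 1_{max (J₁ * J₂)}`, a combination
maximizing `∑ c_J 2^|J|` is supported on a chain of ideals. On combinations supported on a chain,
Stanley's transfer map for `r` sends `∑ c_J • 1_J` to `∑ c_J • 1_{max_r J}`; it is injective, and it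
preserves integrality in both directions. Therefore it restricts to a bijection from the integer
points of a marked order polytope, which depends only on `<` and `λ`, onto the integer points of
`R_λ(P, <, r)`.
-/

section ConvexHull

variable {𝕜 ι κ E : Type*} [Field 𝕜] [LinearOrder 𝕜] [IsStrictOrderedRing 𝕜] [AddCommGroup E]
  [Module 𝕜 E] [Fintype ι]

theorem exists_weights_of_mem_convexHull_image {v : ι → E} {s : Set ι} {x : E}
    (hx : x ∈ convexHull 𝕜 (v '' s)) :
    ∃ c : ι → 𝕜, (∀ i, 0 ≤ c i) ∧ (∀ i, c i ≠ 0 → i ∈ s) ∧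
      ∑ i, c i = 1 ∧ ∑ i, c i • v i = x := by
  classical
  obtain ⟨τ, _, w, z, hw, hw₁, hz, rfl⟩ := mem_convexHull_iff_exists_fintype.mp hx
  choose f hfs hfz using hz
  refine ⟨fun i ↦ ∑ j with f j = i, w j, fun i ↦ Finset.sum_nonneg fun j _ ↦ hw j,
    fun i hi ↦ ?_, ?_, ?_⟩
  · obtain ⟨j, hj, -⟩ := Finset.exists_ne_zero_of_sum_ne_zero hi
    exact (Finset.mem_filter.mp hj).2 ▸ hfs j
  · exact (Finset.sum_fiberwise _ f w).trans hw₁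
  · calc ∑ i, (∑ j with f j = i, w j) • v i
        = ∑ i, ∑ j with f j = i, w j • v (f j) := by
          refine Finset.sum_congr rfl fun i _ ↦ ?_
          rw [Finset.sum_smul]
          exact Finset.sum_congr rfl fun j hj ↦ by rw [(Finset.mem_filter.mp hj).2]
      _ = ∑ j, w j • v (f j) := Finset.sum_fiberwise ..
      _ = ∑ j, w j • z j := by simp only [hfz]

theorem mem_smul_convexHull_image_iff {v : ι → E} {s : Set ι} (hs : s.Nonempty) {a : 𝕜}
    (ha : 0 ≤ a) {x : E} :
    x ∈ a • convexHull 𝕜 (v '' s) ↔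
      ∃ c : ι → 𝕜, (∀ i, 0 ≤ c i) ∧ (∀ i, c i ≠ 0 → i ∈ s) ∧
        ∑ i, c i = a ∧ ∑ i, c i • v i = x := by
  classical
  constructor
  · rintro ⟨y, hy, rfl⟩
    obtain ⟨c, hc, hcs, hc₁, rfl⟩ := exists_weights_of_mem_convexHull_image hy
    refine ⟨fun i ↦ a * c i, fun i ↦ mul_nonneg ha (hc i),
      fun i hi ↦ hcs i (right_ne_zero_of_mul hi), ?_, ?_⟩
    · rw [← Finset.mul_sum, hc₁, mul_one]
    · simp only [mul_smul, Finset.smul_sum]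
  · rintro ⟨c, hc, hcs, rfl, rfl⟩
    obtain h₀ | hpos := ha.eq_or_lt
    · have hc₀ : ∀ i, c i = 0 := fun i ↦
        (Finset.sum_eq_zero_iff_of_nonneg fun i _ ↦ hc i).mp h₀.symm i (Finset.mem_univ i)
      simp [hc₀, Set.zero_smul_set (hs.image v).convexHull]
    · refine ⟨Finset.univ.centerMass c v, ?_, ?_⟩
      · rw [← Finset.centerMass_filter_ne_zero]
        refine Finset.centerMass_mem_convexHull _ (fun i _ ↦ hc i) ?_ fun i hi ↦
          Set.mem_image_of_mem v (hcs i (Finset.mem_filter.mp hi).2)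
        rwa [Finset.sum_filter_ne_zero]
      · simp only [Finset.centerMass, smul_inv_smul₀ hpos.ne']

theorem sum_smul_mem_sum_smul_convexHull_image [DecidableEq κ] {v : ι → E} {π : ι → κ} {s : Set ι}
    {T : Finset κ} (hs : ∀ k ∈ T, ∃ i ∈ s, π i = k) {c : ι → 𝕜} (hc : ∀ i, 0 ≤ c i)
    (hcs : ∀ i, c i ≠ 0 → i ∈ s ∧ π i ∈ T) :
    ∑ i, c i • v i ∈
      ∑ k ∈ T, (∑ i with π i = k, c i) • convexHull 𝕜 (v '' {i ∈ s | π i = k}) := by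
  rw [Set.mem_finsetSum]
  refine ⟨fun k ↦ ∑ i with π i = k, c i • v i, fun {k} hk ↦ ?_, ?_⟩
  · refine (mem_smul_convexHull_image_iff (hs k hk) (Finset.sum_nonneg fun i _ ↦ hc i)).mpr
      ⟨fun i ↦ if π i = k then c i else 0, fun i ↦ ite_nonneg (hc i) le_rfl, fun i hi ↦ ?_, ?_, ?_⟩
    · obtain ⟨hik, hci⟩ := ite_ne_right_iff.mp hi
      exact ⟨(hcs i hci).1, hik⟩
    · rw [Finset.sum_filter]
    · simp only [ite_smul, zero_smul, Finset.sum_filter]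
  · simp only [Finset.sum_filter]
    rw [Finset.sum_comm]
    refine Finset.sum_congr rfl fun i _ ↦ ?_
    rw [Finset.sum_ite_eq, ite_eq_left_iff]
    intro hi
    rw [of_not_not (mt (hcs i) fun h ↦ hi h.2), zero_smul]

theorem mem_sum_smul_convexHull_image_iff [DecidableEq κ] {v : ι → E} {π : ι → κ} {s : Set ι}
    {T : Finset κ} {a : κ → 𝕜} (ha : ∀ k ∈ T, 0 ≤ a k) (hs : ∀ k ∈ T, ∃ i ∈ s, π i = k) {x : E} :
    x ∈ ∑ k ∈ T, a k • convexHull 𝕜 (v '' {i ∈ s | π i = k}) ↔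
      ∃ c : ι → 𝕜, (∀ i, 0 ≤ c i) ∧ (∀ i, c i ≠ 0 → i ∈ s ∧ π i ∈ T) ∧
        (∀ k ∈ T, ∑ i with π i = k, c i = a k) ∧ ∑ i, c i • v i = x := by
  constructor
  · rw [Set.mem_finsetSum]
    rintro ⟨g, hg, rfl⟩
    choose! c hc hcs hca hcg using fun k hk ↦
      (mem_smul_convexHull_image_iff (hs k hk) (ha k hk)).mp (hg (i := k) hk)
    have hc₀ : ∀ k ∈ T, ∀ i, π i ≠ k → c k i = 0 := fun k hk i hik ↦
      by_contra fun h ↦ hik (hcs k hk i h).2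
    refine ⟨fun i ↦ ∑ k ∈ T, c k i, fun i ↦ Finset.sum_nonneg fun k hk ↦ hc k hk i,
      fun i hi ↦ ?_, fun k hk ↦ ?_, ?_⟩
    · obtain ⟨k, hk, hki⟩ := Finset.exists_ne_zero_of_sum_ne_zero hi
      obtain ⟨his, rfl⟩ := hcs k hk i hki
      exact ⟨his, hk⟩
    · calc ∑ i with π i = k, ∑ l ∈ T, c l i = ∑ i with π i = k, c k i :=
            Finset.sum_congr rfl fun i hi ↦ Finset.sum_eq_single_of_mem k hk fun l hl hlk ↦
              hc₀ l hl i ((Finset.mem_filter.mp hi).2.trans_ne hlk.symm)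
        _ = ∑ i, c k i := Finset.sum_filter_of_ne fun i _ hi ↦ (hcs k hk i hi).2
        _ = a k := hca k hk
    · simp only [Finset.sum_smul]
      rw [Finset.sum_comm]
      exact Finset.sum_congr rfl hcg
  · rintro ⟨c, hc, hcs, hca, rfl⟩
    have hT : ∑ k ∈ T, (∑ i with π i = k, c i) • convexHull 𝕜 (v '' {i ∈ s | π i = k}) =
        ∑ k ∈ T, a k • convexHull 𝕜 (v '' {i ∈ s | π i = k}) :=
      Finset.sum_congr rfl fun k hk ↦ by rw [hca k hk]
    exact hT ▸ sum_smul_mem_sum_smul_convexHull_image hs hc hcs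

end ConvexHull

section Transfer

/-- Stanley's transfer map along `r`: it lowers `y p` by the largest value of `y` strictly above
`p`. Inserting `0` makes that value `0` at the `r`-maximal elements. -/
noncomputable def transfer {P G : Type*} [Zero G] [Sub G] [SupSet G] (r : P → P → Prop)
    (y : P → G) : P → G :=
  fun p ↦ y p - sSup (insert 0 (y '' {q | r p q}))

variable {P : Type*} {r : P → P → Prop}

theorem transfer_injective {G : Type*} [AddGroup G] [SupSet G] (hr : WellFounded (flip r)) :
    Function.Injective (transfer r : (P → G) → P → G) := by
  intro y z h
  funext p
  induction p using hr.induction with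
  | _ p ih =>
    have himage : y '' {q | r p q} = z '' {q | r p q} := Set.image_congr ih
    have hp : transfer r y p = transfer r z p := congrFun h p
    rw [transfer, transfer, himage] at hp
    exact sub_left_injective hp

theorem transfer_intCast [Finite P] (y : P → ℤ) :
    transfer r (fun p ↦ (y p : ℝ)) = fun p ↦ ((transfer r y p : ℤ) : ℝ) := by
  funext p
  have hfin : (insert 0 (y '' {q | r p q})).Finite := Set.toFinite _
  have hsup := hfin.map_sSup_of_monotone (Int.cast_mono (R := ℝ)) (Set.insert_nonempty _ _)
  rw [Set.image_insert_eq, Int.cast_zero, Set.image_image] at hsup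
  rw [transfer, transfer, Int.cast_sub, hsup]

theorem eq_transfer_or_exists_eq_transfer_add {G : Type*} [AddGroup G]
    [ConditionallyCompleteLinearOrder G] [Finite P] (y : P → G) (p : P) :
    y p = transfer r y p ∨ ∃ q, r p q ∧ y p = transfer r y p + y q := by
  have hy : y p = transfer r y p + sSup (insert 0 (y '' {q | r p q})) :=
    (sub_add_cancel _ _).symm
  obtain h₀ | ⟨q, hpq, hq⟩ := (Set.insert_nonempty 0 (y '' {q | r p q})).csSup_mem (Set.toFinite _)
  · exact .inl (by rwa [h₀, add_zero] at hy)
  · exact .inr ⟨q, hpq, by rwa [← hq] at hy⟩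

theorem exists_int_transfer_eq [Finite P] (hr : WellFounded (flip r)) {y : P → ℝ} {x : P → ℤ}
    (hyx : transfer r y = fun p ↦ (x p : ℝ)) :
    ∃ z : P → ℤ, (fun p ↦ (z p : ℝ)) = y ∧ transfer r z = x := by
  have hint : ∀ p, ∃ n : ℤ, (n : ℝ) = y p := by
    intro p
    induction p using hr.induction with
    | _ p ih =>
      obtain hp | ⟨q, hpq, hp⟩ := eq_transfer_or_exists_eq_transfer_add (r := r) y p
      · exact ⟨x p, by rw [hp, hyx]⟩
      · obtain ⟨n, hn⟩ := ih q hpq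
        exact ⟨x p + n, by rw [hp, hyx, Int.cast_add, hn]⟩
  choose z hz using hint
  obtain rfl : (fun p ↦ (z p : ℝ)) = y := funext hz
  refine ⟨z, rfl, funext fun p ↦ ?_⟩
  rw [transfer_intCast] at hyx
  exact_mod_cast congrFun hyx p

end Transfer

section IndicatorSums

open scoped Classical in
theorem sum_smul_ind_apply {P ι : Type*} [Fintype ι] (c : ι → ℝ) (A : ι → Set P) (p : P) :
    (∑ i, c i • ind (A i)) p = ∑ i with p ∈ A i, c i := by
  simp [ind, Set.indicator_apply, Finset.sum_apply, Finset.sum_filter]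

variable {P : Type*} {r : P → P → Prop}

open scoped Classical in
theorem sum_smul_ind_apply_eq_add [Fintype P] {c : Set P → ℝ}
    (hlow : ∀ J, c J ≠ 0 → IsLowerIdeal r J) (p : P) :
    (∑ J, c J • ind J) p =
      (∑ J, c J • ind (maxElems r J)) p + ∑ J with ∃ q ∈ J, r p q, c J := by
  simp only [sum_smul_ind_apply, Finset.sum_filter, ← Finset.sum_add_distrib]
  refine Finset.sum_congr rfl fun J _ ↦ ?_
  by_cases hJ : c J = 0
  · simp only [hJ, ite_self, add_zero]
  · have hdown : (∃ q ∈ J, r p q) → p ∈ J := fun ⟨q, hq, hpq⟩ ↦ hlow J hJ hpq hq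
    have hmax : p ∈ maxElems r J ↔ p ∈ J ∧ ¬ ∃ q ∈ J, r p q := by
      simp only [maxElems, Set.mem_sep_iff, not_exists, not_and]
    by_cases hp : ∃ q ∈ J, r p q <;> simp [hmax, hp, hdown]

open scoped Classical in
theorem isGreatest_sum_above [Fintype P] {c : Set P → ℝ} (hc : ∀ J, 0 ≤ c J)
    (hchain : IsChain (· ⊆ ·) (Function.support c)) (p : P) :
    IsGreatest (insert 0 ((∑ J, c J • ind J) '' {q | r p q})) (∑ J with ∃ q ∈ J, r p q, c J) := by
  constructor
  · obtain hne | hempty := {J | c J ≠ 0 ∧ ∃ q ∈ J, r p q}.eq_empty_or_nonempty.symm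
    · obtain ⟨J₀, ⟨hJ₀, q, hq, hpq⟩, hmin⟩ := (Set.toFinite _).exists_minimal hne
      refine .inr ⟨q, hpq, ?_⟩
      rw [sum_smul_ind_apply, Finset.sum_filter, Finset.sum_filter]
      refine Finset.sum_congr rfl fun J _ ↦ ?_
      by_cases hJ : c J = 0
      · simp only [hJ, ite_self]
      · have hiff : q ∈ J ↔ ∃ q ∈ J, r p q :=
          ⟨fun h ↦ ⟨q, h, hpq⟩, fun h ↦
            ((hchain.total hJ hJ₀).elim (hmin ⟨hJ, h⟩) id) hq⟩
        simp only [hiff]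
    · refine .inl (Finset.sum_eq_zero fun J hJ ↦ of_not_not fun h ↦ ?_)
      exact Set.eq_empty_iff_forall_notMem.mp hempty J ⟨h, (Finset.mem_filter.mp hJ).2⟩
  · rintro _ (rfl | ⟨q, hpq, rfl⟩)
    · exact Finset.sum_nonneg fun J _ ↦ hc J
    · rw [sum_smul_ind_apply]
      exact Finset.sum_le_sum_of_subset_of_nonneg
        (Finset.monotone_filter_right _ fun J _ hq ↦ ⟨q, hq, hpq⟩) fun J _ _ ↦ hc J

theorem transfer_sum_smul_ind [Fintype P] {c : Set P → ℝ} (hc : ∀ J, 0 ≤ c J)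
    (hlow : ∀ J, c J ≠ 0 → IsLowerIdeal r J) (hchain : IsChain (· ⊆ ·) (Function.support c)) :
    transfer r (∑ J, c J • ind J) = ∑ J, c J • ind (maxElems r J) := by
  classical
  funext p
  rw [transfer, (isGreatest_sum_above hc hchain p).csSup_eq, sum_smul_ind_apply_eq_add hlow,
    add_sub_cancel_right]

end IndicatorSums

section LevelSets

open scoped Finset

variable {P : Type*}

/-- The set where `y` is at least `t`. -/
def superlevelSet (y : P → ℤ) (t : ℕ) : Set P :=
  {p | (t : ℤ) ≤ y p}

theorem mem_superlevelSet {y : P → ℤ} {t : ℕ} {p : P} :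
    p ∈ superlevelSet y t ↔ (t : ℤ) ≤ y p :=
  Iff.rfl

theorem superlevelSet_antitone (y : P → ℤ) : Antitone (superlevelSet y) :=
  fun _ _ hst _ hp ↦ mem_superlevelSet.mpr ((Nat.cast_le.mpr hst).trans (mem_superlevelSet.mp hp))

open scoped Classical in
/-- The number of `t ∈ {1, …, N}` whose superlevel set is `J`; these are the coefficients of the
layer-cake decomposition of `y` into indicator vectors. -/
noncomputable def levelMultiplicity (y : P → ℤ) (N : ℕ) (J : Set P) : ℕ :=
  #{t ∈ Finset.Icc 1 N | superlevelSet y t = J}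

theorem exists_superlevelSet_eq_of_levelMultiplicity_ne_zero {y : P → ℤ} {N : ℕ} {J : Set P}
    (hJ : levelMultiplicity y N J ≠ 0) : ∃ t, superlevelSet y t = J := by
  obtain ⟨t, ht⟩ := Finset.card_ne_zero.mp hJ
  exact ⟨t, (Finset.mem_filter.mp ht).2⟩

theorem isChain_support_levelMultiplicity (y : P → ℤ) (N : ℕ) :
    IsChain (· ⊆ ·) (Function.support (levelMultiplicity y N)) := by
  intro J₁ hJ₁ J₂ hJ₂ _
  obtain ⟨t₁, rfl⟩ := exists_superlevelSet_eq_of_levelMultiplicity_ne_zero hJ₁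
  obtain ⟨t₂, rfl⟩ := exists_superlevelSet_eq_of_levelMultiplicity_ne_zero hJ₂
  exact (le_total t₂ t₁).imp (superlevelSet_antitone y ·) (superlevelSet_antitone y ·)

open scoped Classical in
theorem sum_levelMultiplicity (y : P → ℤ) (N : ℕ) (𝒜 : Finset (Set P)) :
    ∑ J ∈ 𝒜, levelMultiplicity y N J = #{t ∈ Finset.Icc 1 N | superlevelSet y t ∈ 𝒜} :=
  Finset.sum_card_fiberwise_eq_card_filter _ _ _

theorem sum_levelMultiplicity_smul_ind [Fintype P] {y : P → ℤ} {N : ℕ}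
    (hy : ∀ p, y p ∈ Set.Icc 0 (N : ℤ)) :
    ∑ J, (levelMultiplicity y N J : ℝ) • ind J = fun p ↦ (y p : ℝ) := by
  classical
  funext p
  obtain ⟨hy₀, hyN⟩ := hy p
  have hlevels : (Finset.Icc 1 N).filter (p ∈ superlevelSet y ·) = Finset.Icc 1 (y p).toNat := by
    ext t
    rw [Finset.mem_filter, Finset.mem_Icc, Finset.mem_Icc, mem_superlevelSet]
    lia
  have hcard : ∑ J with p ∈ J, levelMultiplicity y N J = (y p).toNat := by
    simp only [sum_levelMultiplicity, Finset.mem_filter_univ, hlevels, Nat.card_Icc,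
      Nat.add_sub_cancel]
  rw [sum_smul_ind_apply, ← Nat.cast_sum, hcard]
  exact_mod_cast Int.toNat_of_nonneg hy₀

open scoped Classical in
theorem sum_levelMultiplicity_inter_eq [Fintype P] (y : P → ℤ) (N : ℕ) (S K : Set P) :
    ∑ J with J ∩ S = K, levelMultiplicity y N J = levelMultiplicity (S.indicator y) N K := by
  rw [sum_levelMultiplicity, levelMultiplicity]
  simp only [Finset.mem_filter_univ]
  refine congrArg Finset.card (Finset.filter_congr fun t ht ↦ ?_)
  have ht₁ : 1 ≤ t := (Finset.mem_Icc.mp ht).1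
  suffices superlevelSet y t ∩ S = superlevelSet (S.indicator y) t by rw [this]
  ext p
  by_cases hp : p ∈ S
  · simp [mem_superlevelSet, hp]
  · rw [mem_superlevelSet, Set.indicator_of_notMem hp]
    exact iff_of_false (fun h ↦ hp h.2) (by lia)

open scoped Classical in
theorem superlevelSet_sum_of_isChain [Fintype P] {a : Set P → ℕ}
    (ha : IsChain (· ⊆ ·) (Function.support a)) {K : Set P} (hK : a K ≠ 0) {t : ℕ}
    (ht : t ∈ Finset.Ioc (∑ J with K ⊂ J, a J) (∑ J with K ⊆ J, a J)) :
    superlevelSet (fun p ↦ ((∑ J with p ∈ J, a J : ℕ) : ℤ)) t = K := by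
  obtain ⟨hlt, hle⟩ := Finset.mem_Ioc.mp ht
  ext p
  rw [mem_superlevelSet, Nat.cast_le]
  constructor
  · intro htp
    by_contra hp
    refine (hlt.trans_le htp).not_ge ?_
    simp only [Finset.sum_filter]
    refine Finset.sum_le_sum fun J _ ↦ ?_
    obtain hJ | hJ := eq_or_ne (a J) 0
    · simp only [hJ, ite_self, le_refl]
    · by_cases hpJ : p ∈ J
      · have hssub : K ⊂ J :=
          ((ha.total hK hJ).resolve_right fun h ↦ hp (h hpJ)).ssubset_of_mem_notMem hpJ hp
        rw [if_pos hpJ, if_pos hssub]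
      · rw [if_neg hpJ]
        exact Nat.zero_le _
  · exact fun hp ↦ hle.trans
      (Finset.sum_le_sum_of_subset (Finset.monotone_filter_right _ fun J _ hJ ↦ hJ hp))

open scoped Classical in
theorem levelMultiplicity_sum_of_isChain [Fintype P] {a : Set P → ℕ}
    (ha : IsChain (· ⊆ ·) (Function.support a)) :
    levelMultiplicity (fun p ↦ ((∑ J with p ∈ J, a J : ℕ) : ℤ)) (∑ J, a J) = a := by
  have hle : ∀ K ∈ Finset.univ,
      a K ≤ levelMultiplicity (fun p ↦ ((∑ J with p ∈ J, a J : ℕ) : ℤ)) (∑ J, a J) K := by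
    intro K _
    obtain hK | hK := eq_or_ne (a K) 0
    · exact hK ▸ Nat.zero_le _
    have hsup : Finset.univ.filter (K ⊆ ·) = insert K (Finset.univ.filter (K ⊂ ·)) := by
      ext J
      simp only [Finset.mem_filter_univ, Finset.mem_insert, eq_comm (a := J)]
      exact le_iff_eq_or_lt
    have hcard : a K = #(Finset.Ioc (∑ J with K ⊂ J, a J) (∑ J with K ⊆ J, a J)) := by
      rw [Nat.card_Ioc, hsup, Finset.sum_insert (by simp), Nat.add_sub_cancel]
    rw [hcard]
    refine Finset.card_le_card fun t ht ↦
      Finset.mem_filter.mpr ⟨Finset.mem_Icc.mpr ?_, superlevelSet_sum_of_isChain ha hK ht⟩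
    obtain ⟨hlt, hle⟩ := Finset.mem_Ioc.mp ht
    exact ⟨Nat.one_le_of_lt hlt, hle.trans (Finset.sum_le_sum_of_subset (Finset.subset_univ _))⟩
  have htotal : ∑ K, a K =
      ∑ K, levelMultiplicity (fun p ↦ ((∑ J with p ∈ J, a J : ℕ) : ℤ)) (∑ J, a J) K := by
    simp only [sum_levelMultiplicity, Finset.mem_univ, Finset.filter_true, Nat.card_Icc,
      Nat.add_sub_cancel]
  exact funext fun K ↦ ((Finset.sum_eq_sum_iff_of_le hle).mp htotal K (Finset.mem_univ K)).symm

end LevelSets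

section OrderIdeals

variable {P : Type*} {r : P → P → Prop} {A J J₁ J₂ S : Set P}

theorem subset_genIdeal : A ⊆ genIdeal r A :=
  fun p hp ↦ ⟨p, hp, .inl rfl⟩

theorem genIdeal_subset (hJ : IsLowerIdeal r J) (hA : A ⊆ J) : genIdeal r A ⊆ J := by
  rintro p ⟨q, hq, rfl | hpq⟩
  · exact hA hq
  · exact hJ hpq (hA hq)

theorem isLowerIdeal_genIdeal [IsTrans P r] (A : Set P) : IsLowerIdeal r (genIdeal r A) := by
  rintro p q hpq ⟨s, hs, rfl | hqs⟩
  · exact ⟨q, hs, .inr hpq⟩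
  · exact ⟨s, hs, .inr (_root_.trans hpq hqs)⟩

theorem maxElems_genIdeal [IsTrans P r] (hA : ∀ p ∈ A, ∀ q ∈ A, ¬ r p q) :
    maxElems r (genIdeal r A) = A := by
  ext p
  constructor
  · rintro ⟨⟨q, hq, rfl | hpq⟩, hmax⟩
    · exact hq
    · exact absurd hpq (hmax q (subset_genIdeal hq))
  · refine fun hp ↦ ⟨subset_genIdeal hp, ?_⟩
    rintro q ⟨s, hs, rfl | hqs⟩ hpq
    · exact hA p hp q hs hpq
    · exact hA p hp s hs (_root_.trans hpq hqs)

theorem IsLowerIdeal.union (h₁ : IsLowerIdeal r J₁) (h₂ : IsLowerIdeal r J₂) :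
    IsLowerIdeal r (J₁ ∪ J₂) :=
  fun _ _ hpq ↦ Or.imp (h₁ hpq) (h₂ hpq)

theorem IsLowerIdeal.of_le {s : P → P → Prop} (h : IsLowerIdeal s J) (hrs : r ≤ s) :
    IsLowerIdeal r J :=
  fun p q hpq ↦ h (hrs p q hpq)

theorem maxElems_starOp [IsTrans P r] (J₁ J₂ : Set P) :
    maxElems r (starOp r J₁ J₂) = J₁ ∩ J₂ ∩ (maxElems r J₁ ∪ maxElems r J₂) := by
  refine maxElems_genIdeal ?_
  rintro p ⟨-, hp | hp⟩ q ⟨hq, -⟩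
  · exact hp.2 q hq.1
  · exact hp.2 q hq.2

theorem maxElems_union_union_maxElems_starOp [IsTrans P r] (h₁ : IsLowerIdeal r J₁)
    (h₂ : IsLowerIdeal r J₂) :
    maxElems r (J₁ ∪ J₂) ∪ maxElems r (starOp r J₁ J₂) = maxElems r J₁ ∪ maxElems r J₂ := by
  rw [maxElems_starOp]
  ext p
  simp only [maxElems, Set.mem_union, Set.mem_inter_iff, Set.mem_sep_iff]
  grind [IsLowerIdeal]

theorem maxElems_union_inter_maxElems_starOp [IsTrans P r] (J₁ J₂ : Set P) :
    maxElems r (J₁ ∪ J₂) ∩ maxElems r (starOp r J₁ J₂) = maxElems r J₁ ∩ maxElems r J₂ := by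
  rw [maxElems_starOp]
  ext p
  simp only [maxElems, Set.mem_union, Set.mem_inter_iff, Set.mem_sep_iff]
  grind

theorem ind_maxElems_union_add_ind_maxElems_starOp [IsTrans P r] (h₁ : IsLowerIdeal r J₁)
    (h₂ : IsLowerIdeal r J₂) :
    ind (maxElems r (J₁ ∪ J₂)) + ind (maxElems r (starOp r J₁ J₂)) =
      ind (maxElems r J₁) + ind (maxElems r J₂) := by
  rw [ind, ind, ← Set.indicator_union_add_inter, maxElems_union_union_maxElems_starOp h₁ h₂,
    maxElems_union_inter_maxElems_starOp, Set.indicator_union_add_inter, ind, ind]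

theorem starOp_inter_of_forall_not_rel (h₁ : IsLowerIdeal r J₁) (h₂ : IsLowerIdeal r J₂)
    (hS : ∀ p ∈ S, ∀ q, ¬ r p q) : starOp r J₁ J₂ ∩ S = J₁ ∩ J₂ ∩ S := by
  ext p
  refine and_congr_left fun hp ↦ ⟨fun h ↦ ?_, fun h ↦ subset_genIdeal ⟨h, .inl ⟨h.1, ?_⟩⟩⟩
  · exact ⟨genIdeal_subset h₁ (fun _ h ↦ h.1.1) h, genIdeal_subset h₂ (fun _ h ↦ h.1.2) h⟩
  · exact fun q _ ↦ hS p hp q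

theorem IsLowerIdeal.inter_mem_idealsOn (hJ : IsLowerIdeal r J) (S : Set P) :
    J ∩ S ∈ idealsOn r S :=
  ⟨Set.inter_subset_right, fun _ _ hp _ hpq hq ↦ ⟨hJ hpq hq.1, hp⟩⟩

theorem exists_isLowerIdeal_inter_eq [IsTrans P r] {K : Set P} (hK : K ∈ idealsOn r S) :
    ∃ J, IsLowerIdeal r J ∧ J ∩ S = K := by
  refine ⟨genIdeal r K, isLowerIdeal_genIdeal K, ?_⟩
  refine Set.Subset.antisymm ?_ fun p hp ↦ ⟨subset_genIdeal hp, hK.1 hp⟩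
  rintro p ⟨⟨q, hq, rfl | hpq⟩, hp⟩
  · exact hq
  · exact hK.2 p q hp (hK.1 hq) hpq hq

theorem two_pow_ncard_add_le_two_pow_ncard_union [Finite P] (h₁ : ¬ J₁ ⊆ J₂) (h₂ : ¬ J₂ ⊆ J₁) :
    2 ^ J₁.ncard + 2 ^ J₂.ncard ≤ 2 ^ (J₁ ∪ J₂).ncard := by
  have hlt₁ : J₁.ncard < (J₁ ∪ J₂).ncard :=
    Set.ncard_lt_ncard (left_lt_sup.mpr h₂)
  have hlt₂ : J₂.ncard < (J₁ ∪ J₂).ncard :=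
    Set.ncard_lt_ncard (right_lt_sup.mpr h₁)
  have hpow₁ : 2 ^ (J₁.ncard + 1) ≤ 2 ^ (J₁ ∪ J₂).ncard := Nat.pow_le_pow_right two_pos hlt₁
  have hpow₂ : 2 ^ (J₂.ncard + 1) ≤ 2 ^ (J₁ ∪ J₂).ncard := Nat.pow_le_pow_right two_pos hlt₂
  lia

end OrderIdeals

section Exchange

variable {ι R : Type*} [DecidableEq ι] [CommRing R]

/-- Moves weight `ε` from the two indices `k`, `l` to the two indices `i`, `j`. -/
def exchange (c : ι → R) (ε : R) (i j k l : ι) : ι → R :=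
  c + ε • (Pi.single i 1 + Pi.single j 1 - Pi.single k 1 - Pi.single l 1)

theorem sum_exchange_smul [Fintype ι] {E : Type*} [AddCommGroup E] [Module R E] (c : ι → R)
    (ε : R) (i j k l : ι) (f : ι → E) :
    ∑ t, exchange c ε i j k l t • f t = ∑ t, c t • f t + ε • (f i + f j - f k - f l) := by
  simp [exchange, add_smul, sub_smul, mul_smul, ← Finset.smul_sum, Finset.sum_add_distrib,
    Finset.sum_sub_distrib, Pi.single_apply, ite_smul]

theorem exchange_nonneg [LinearOrder R] [IsStrictOrderedRing R] {c : ι → R}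
    (hc : ∀ t, 0 ≤ c t) {ε : R} (hε : 0 ≤ ε) (i j : ι) {k l : ι} (hkl : k ≠ l)
    (hk : ε ≤ c k) (hl : ε ≤ c l) (t : ι) : 0 ≤ exchange c ε i j k l t := by
  have hadd : ∀ s, 0 ≤ ε * (Pi.single s 1 : ι → R) t := fun s ↦
    mul_nonneg hε ((Pi.single_nonneg.mpr zero_le_one : (0 : ι → R) ≤ Pi.single s 1) t)
  have hsub : ε * (Pi.single k 1 : ι → R) t + ε * (Pi.single l 1 : ι → R) t ≤ c t := by
    obtain rfl | htk := eq_or_ne t k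
    · simpa [Pi.single_eq_of_ne hkl] using hk
    · obtain rfl | htl := eq_or_ne t l
      · simpa [Pi.single_eq_of_ne htk] using hl
      · simpa [Pi.single_eq_of_ne htk, Pi.single_eq_of_ne htl] using hc t
  simp only [exchange, Pi.add_apply, Pi.smul_apply, Pi.sub_apply, smul_eq_mul, mul_add, mul_sub]
  linarith [hadd i, hadd j]

theorem ne_zero_or_eq_of_exchange_ne_zero {c : ι → R} {ε : R} {i j k l t : ι}
    (ht : exchange c ε i j k l t ≠ 0) : c t ≠ 0 ∨ t = i ∨ t = j ∨ t = k ∨ t = l := by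
  contrapose! ht
  obtain ⟨hct, hi, hj, hk, hl⟩ := ht
  simp [exchange, hct, Pi.single_eq_of_ne, hi, hj, hk, hl]

end Exchange

section VertexDecompositions

variable {P : Type*} [Fintype P] {lt r : P → P → Prop} {Pstar : Set P} {a : Set P → ℝ}
  {x : P → ℝ} {c : Set P → ℝ}

open scoped Classical in
/-- The weights `c` express `x` as a point of the Minkowski sum `∑ K, a K • R_{ω_K}(P, lt, r)`: an
order ideal `J` contributes to the summand of its trace `J ∩ P*`, and the weights with trace `K`
add up to `a K`. -/
structure IsVertexDecomposition (lt r : P → P → Prop) (Pstar : Set P) (a : Set P → ℝ) (x : P → ℝ)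
    (c : Set P → ℝ) : Prop where
  nonneg : ∀ J, 0 ≤ c J
  isLowerIdeal : ∀ J, c J ≠ 0 → IsLowerIdeal lt J
  sum_trace : ∀ K, ∑ J with J ∩ Pstar = K, c J = a K
  sum_smul : ∑ J, c J • ind (maxElems r J) = x

namespace IsVertexDecomposition

theorem le_trace (h : IsVertexDecomposition lt r Pstar a x c) (J : Set P) :
    c J ≤ a (J ∩ Pstar) := by
  classical
  rw [← h.sum_trace]
  exact Finset.single_le_sum (fun J _ ↦ h.nonneg J) (Finset.mem_filter_univ J |>.mpr rfl)

theorem trace_ne_zero (h : IsVertexDecomposition lt r Pstar a x c) {J : Set P} (hJ : c J ≠ 0) :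
    a (J ∩ Pstar) ≠ 0 :=
  (((h.nonneg J).lt_of_ne' hJ).trans_le (h.le_trace J)).ne'

open scoped Classical in
theorem exchange_union_starOp [IsTrans P r] (h : IsVertexDecomposition lt r Pstar a x c)
    (hr : r ≤ lt)
    (hstar : ∀ J₁ J₂, IsLowerIdeal lt J₁ → IsLowerIdeal lt J₂ → IsLowerIdeal lt (starOp r J₁ J₂))
    (hmax : ∀ p ∈ Pstar, ∀ q, ¬ r p q) (ha : IsChain (· ⊆ ·) (Function.support a))
    {J₁ J₂ : Set P} (hne : J₁ ≠ J₂) (h₁ : c J₁ ≠ 0) (h₂ : c J₂ ≠ 0) {ε : ℝ} (hε : 0 ≤ ε)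
    (hε₁ : ε ≤ c J₁) (hε₂ : ε ≤ c J₂) :
    IsVertexDecomposition lt r Pstar a x (exchange c ε (J₁ ∪ J₂) (starOp r J₁ J₂) J₁ J₂) := by
  have hlt₁ := h.isLowerIdeal J₁ h₁
  have hlt₂ := h.isLowerIdeal J₂ h₂
  have hr₁ : IsLowerIdeal r J₁ := hlt₁.of_le hr
  have hr₂ : IsLowerIdeal r J₂ := hlt₂.of_le hr
  refine ⟨exchange_nonneg h.nonneg hε _ _ hne hε₁ hε₂, fun J hJ ↦ ?_, fun K ↦ ?_, ?_⟩
  · obtain hJ | rfl | rfl | rfl | rfl := ne_zero_or_eq_of_exchange_ne_zero hJ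
    exacts [h.isLowerIdeal J hJ, hlt₁.union hlt₂, hstar J₁ J₂ hlt₁ hlt₂, hlt₁, hlt₂]
  · have htrace : (if (J₁ ∪ J₂) ∩ Pstar = K then 1 else 0) +
        (if starOp r J₁ J₂ ∩ Pstar = K then 1 else 0) - (if J₁ ∩ Pstar = K then 1 else 0) -
        (if J₂ ∩ Pstar = K then 1 else 0) = (0 : ℝ) := by
      rw [starOp_inter_of_forall_not_rel hr₁ hr₂ hmax, Set.union_inter_distrib_right,
        Set.inter_inter_distrib_right]
      obtain hle | hle := ha.total (h.trace_ne_zero h₁) (h.trace_ne_zero h₂)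
      · rw [Set.union_eq_right.mpr hle, Set.inter_eq_left.mpr hle]
        ring
      · rw [Set.union_eq_left.mpr hle, Set.inter_eq_right.mpr hle]
        ring
    have hsum := sum_exchange_smul c ε (J₁ ∪ J₂) (starOp r J₁ J₂) J₁ J₂
      fun J ↦ if J ∩ Pstar = K then (1 : ℝ) else 0
    rw [htrace, smul_zero, add_zero] at hsum
    simpa only [smul_eq_mul, mul_ite, mul_one, mul_zero, ← Finset.sum_filter, h.sum_trace]
      using hsum
  · rw [sum_exchange_smul, ind_maxElems_union_add_ind_maxElems_starOp hr₁ hr₂,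
      add_sub_cancel_left, sub_self, smul_zero, add_zero, h.sum_smul]

end IsVertexDecomposition

variable (lt r Pstar a x) in
theorem isCompact_setOf_isVertexDecomposition :
    IsCompact {c | IsVertexDecomposition lt r Pstar a x c} := by
  classical
  have heq : {c | IsVertexDecomposition lt r Pstar a x c} =
      {c | ∀ J, 0 ≤ c J} ∩ {c | ∀ J, ¬ IsLowerIdeal lt J → c J = 0} ∩
      {c | ∀ K, ∑ J with J ∩ Pstar = K, c J = a K} ∩
      {c | ∑ J, c J • ind (maxElems r J) = x} := by
    ext c
    constructor
    · exact fun h ↦ ⟨⟨⟨h.nonneg, fun J ↦ not_imp_comm.mp (h.isLowerIdeal J)⟩, h.sum_trace⟩,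
        h.sum_smul⟩
    · exact fun ⟨⟨⟨h₀, hlow⟩, htrace⟩, hx⟩ ↦
        ⟨h₀, fun J ↦ not_imp_comm.mp (hlow J), htrace, hx⟩
  have hclosed : IsClosed {c | IsVertexDecomposition lt r Pstar a x c} := by
    rw [heq]
    simp only [Set.ofPred_forall]
    refine ((IsClosed.inter ?_ ?_).inter ?_).inter ?_
    · exact isClosed_iInter fun J ↦ isClosed_le (by fun_prop) (by fun_prop)
    · exact isClosed_iInter fun J ↦ isClosed_iInter fun _ ↦ isClosed_eq (by fun_prop) (by fun_prop)
    · exact isClosed_iInter fun K ↦ isClosed_eq (by fun_prop) (by fun_prop)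
    · exact isClosed_eq (by fun_prop) (by fun_prop)
  exact isCompact_Icc.of_isClosed_subset hclosed fun c hc ↦ ⟨hc.nonneg, hc.le_trace⟩

-- Moving weight from incomparable `J₁`, `J₂` to `J₁ ∪ J₂`, `J₁ * J₂` increases
-- `∑ J, c J * 2 ^ |J|`.
theorem IsVertexDecomposition.exists_isChain_support [IsTrans P r]
    (h : IsVertexDecomposition lt r Pstar a x c) (hr : r ≤ lt)
    (hstar : ∀ J₁ J₂, IsLowerIdeal lt J₁ → IsLowerIdeal lt J₂ → IsLowerIdeal lt (starOp r J₁ J₂))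
    (hmax : ∀ p ∈ Pstar, ∀ q, ¬ r p q) (ha : IsChain (· ⊆ ·) (Function.support a)) :
    ∃ c, IsVertexDecomposition lt r Pstar a x c ∧ IsChain (· ⊆ ·) (Function.support c) := by
  classical
  obtain ⟨d, hd, hdmax⟩ := (isCompact_setOf_isVertexDecomposition lt r Pstar a x).exists_isMaxOn
    ⟨c, h⟩ (f := fun c ↦ ∑ J, c J • (2 : ℝ) ^ J.ncard) (by fun_prop)
  refine ⟨d, hd, fun J₁ h₁ J₂ h₂ hne ↦ ?_⟩
  by_contra! hcomp
  set ε := min (d J₁) (d J₂)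
  have hε : 0 < ε := lt_min ((hd.nonneg J₁).lt_of_ne' h₁) ((hd.nonneg J₂).lt_of_ne' h₂)
  have hle := hdmax (hd.exchange_union_starOp hr hstar hmax ha hne h₁ h₂ hε.le (min_le_left _ _)
    (min_le_right _ _))
  simp only [Set.mem_ofPred_eq, sum_exchange_smul, add_le_iff_nonpos_right] at hle
  have hgain : (0 : ℝ) < 2 ^ (J₁ ∪ J₂).ncard + 2 ^ (starOp r J₁ J₂).ncard - 2 ^ J₁.ncard -
      2 ^ J₂.ncard := by
    have hpow : (2 : ℝ) ^ J₁.ncard + 2 ^ J₂.ncard ≤ 2 ^ (J₁ ∪ J₂).ncard := by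
      exact_mod_cast two_pow_ncard_add_le_two_pow_ncard_union hcomp.1 hcomp.2
    have hstar_pos : (0 : ℝ) < 2 ^ (starOp r J₁ J₂).ncard := by positivity
    linarith
  exact hle.not_gt (smul_pos hε hgain)

theorem dilate_RPPmarked (m : ℕ) (α : Set P → ℕ) :
    dilate m (RPPmarked lt r Pstar α) = RPPmarked lt r Pstar (m • α) := by
  simp only [RPPmarked, dilate, Set.image_smul, Finset.smul_sum, smul_smul, Pi.smul_apply,
    smul_eq_mul, Nat.cast_mul]

theorem mem_RPPmarked_iff [IsTrans P lt] {α : Set P → ℕ}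
    (hα : ∀ K, α K ≠ 0 → K ∈ idealsOn lt Pstar) :
    x ∈ RPPmarked lt r Pstar α ↔
      ∃ c, IsVertexDecomposition lt r Pstar (fun K ↦ (α K : ℝ)) x c := by
  classical
  have hfund : ∀ K, RPPfund lt r Pstar K = convexHull ℝ
      ((fun J ↦ ind (maxElems r J)) '' {J ∈ {J | IsLowerIdeal lt J} | J ∩ Pstar = K}) := by
    intro K
    refine congrArg _ (Set.ext fun y ↦ exists_congr fun J ↦ ?_)
    rw [Set.mem_sep_iff, and_assoc, eq_comm (a := y)]
    rfl
  simp only [RPPmarked, dilate, Set.image_smul, hfund]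
  rw [mem_sum_smul_convexHull_image_iff (s := {J | IsLowerIdeal lt J})
    (fun K _ ↦ Nat.cast_nonneg (α K)) fun K hK ↦
    exists_isLowerIdeal_inter_eq ((Set.Finite.mem_toFinset _).mp hK)]
  refine exists_congr fun c ↦ ⟨?_, fun h ↦ ⟨h.nonneg, fun J hJ ↦ ?_, fun K _ ↦ h.sum_trace K,
    h.sum_smul⟩⟩
  · rintro ⟨h₀, hlow, htrace, hx⟩
    refine ⟨h₀, fun J hJ ↦ (hlow J hJ).1, fun K ↦ ?_, hx⟩
    by_cases hK : K ∈ idealsOn lt Pstar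
    · exact htrace K ((Set.Finite.mem_toFinset _).mpr hK)
    · rw [of_not_not (mt (hα K) hK), Nat.cast_zero]
      refine Finset.sum_eq_zero fun J hJ ↦ of_not_not fun hcJ ↦ hK ?_
      exact (Finset.mem_filter.mp hJ).2 ▸ (hlow J hcJ).1.inter_mem_idealsOn Pstar
  · exact ⟨h.isLowerIdeal J hJ, (Set.Finite.mem_toFinset _).mpr
      ((h.isLowerIdeal J hJ).inter_mem_idealsOn Pstar)⟩

end VertexDecompositions

section MarkedOrderPoints

variable {P : Type*} [Fintype P] {lt r : P → P → Prop} {Pstar : Set P}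

theorem IsVertexDecomposition.sum_eq {a : Set P → ℝ} {x : P → ℝ} {c : Set P → ℝ}
    (h : IsVertexDecomposition lt r Pstar a x c) : ∑ J, c J = ∑ K, a K := by
  classical
  simp only [← h.sum_trace, Finset.sum_fiberwise]

open scoped Classical in
theorem IsVertexDecomposition.sum_mem_eq {a : Set P → ℝ} {x : P → ℝ} {c : Set P → ℝ}
    (h : IsVertexDecomposition lt r Pstar a x c) {p : P} (hp : p ∈ Pstar) :
    ∑ J with p ∈ J, c J = ∑ K with p ∈ K, a K := by
  simp only [← h.sum_trace, Finset.sum_fiberwise_eq_sum_filter, Finset.mem_filter_univ,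
    Set.mem_inter_iff, hp, and_true]

open scoped Classical in
/-- The integer points of the marked order polytope of `(P, lt)` for the marking `∑ K, α K • 1_K`
on `P*`: the order-reversing maps `P → {0, …, ∑ K, α K}` that extend this marking. -/
def markedOrderPoints (lt : P → P → Prop) (Pstar : Set P) (α : Set P → ℕ) : Set (P → ℤ) :=
  {y | (∀ p, y p ∈ Set.Icc 0 ((∑ K, α K : ℕ) : ℤ)) ∧ (∀ p q, lt p q → y q ≤ y p) ∧
    ∀ p ∈ Pstar, y p = ((∑ K with p ∈ K, α K : ℕ) : ℤ)}

variable {α : Set P → ℕ}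

open scoped Classical in
theorem indicator_eq_of_mem_markedOrderPoints {y : P → ℤ} (hy : y ∈ markedOrderPoints lt Pstar α)
    (hα : ∀ K, α K ≠ 0 → K ⊆ Pstar) :
    Pstar.indicator y = fun p ↦ ((∑ K with p ∈ K, α K : ℕ) : ℤ) := by
  funext p
  by_cases hp : p ∈ Pstar
  · rw [Set.indicator_of_mem hp, hy.2.2 p hp]
  · rw [Set.indicator_of_notMem hp, Finset.sum_eq_zero, Nat.cast_zero]
    exact fun K hK ↦ of_not_not fun h ↦ hp (hα K h (Finset.mem_filter.mp hK).2)

theorem isVertexDecomposition_levelMultiplicity {y : P → ℤ}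
    (hy : y ∈ markedOrderPoints lt Pstar α) (hr : r ≤ lt) (hα : ∀ K, α K ≠ 0 → K ⊆ Pstar)
    (hchain : IsChain (· ⊆ ·) (Function.support α)) :
    IsVertexDecomposition lt r Pstar (fun K ↦ (α K : ℝ)) (fun p ↦ ((transfer r y p : ℤ) : ℝ))
      fun J ↦ (levelMultiplicity y (∑ K, α K) J : ℝ) := by
  classical
  have hlow : ∀ J, (levelMultiplicity y (∑ K, α K) J : ℝ) ≠ 0 → IsLowerIdeal lt J := by
    intro J hJ
    obtain ⟨t, rfl⟩ :=
      exists_superlevelSet_eq_of_levelMultiplicity_ne_zero (Nat.cast_ne_zero.mp hJ)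
    exact fun p q hpq hq ↦
      mem_superlevelSet.mpr ((mem_superlevelSet.mp hq).trans (hy.2.1 p q hpq))
  have hsupp : IsChain (· ⊆ ·)
      (Function.support fun J ↦ (levelMultiplicity y (∑ K, α K) J : ℝ)) :=
    (isChain_support_levelMultiplicity y _).mono fun J ↦ Nat.cast_ne_zero.mp
  refine ⟨fun J ↦ Nat.cast_nonneg _, hlow, fun K ↦ ?_, ?_⟩
  · rw [← Nat.cast_sum, sum_levelMultiplicity_inter_eq,
      indicator_eq_of_mem_markedOrderPoints hy hα, levelMultiplicity_sum_of_isChain hchain]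
  · rw [← transfer_intCast, ← sum_levelMultiplicity_smul_ind hy.1, transfer_sum_smul_ind
      (fun J ↦ Nat.cast_nonneg _) (fun J hJ ↦ (hlow J hJ).of_le hr) hsupp]

theorem IsVertexDecomposition.mem_markedOrderPoints {x : P → ℝ} {c : Set P → ℝ}
    (h : IsVertexDecomposition lt r Pstar (fun K ↦ (α K : ℝ)) x c) {y : P → ℤ}
    (hy : (fun p ↦ (y p : ℝ)) = ∑ J, c J • ind J) : y ∈ markedOrderPoints lt Pstar α := by
  classical
  have hyp : ∀ p, (y p : ℝ) = ∑ J with p ∈ J, c J := fun p ↦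
    (congrFun hy p).trans (sum_smul_ind_apply c id p)
  refine ⟨fun p ↦ ⟨?_, ?_⟩, fun p q hpq ↦ ?_, fun p hp ↦ ?_⟩ <;>
    rify <;> simp only [hyp]
  · exact Finset.sum_nonneg fun J _ ↦ h.nonneg J
  · rw [← h.sum_eq]
    exact Finset.sum_le_sum_of_subset_of_nonneg (Finset.subset_univ _) fun J _ _ ↦ h.nonneg J
  · simp only [Finset.sum_filter]
    refine Finset.sum_le_sum fun J _ ↦ ?_
    obtain hJ | hJ := eq_or_ne (c J) 0
    · simp only [hJ, ite_self, le_refl]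
    · by_cases hq : q ∈ J
      · rw [if_pos hq, if_pos (h.isLowerIdeal J hJ hpq hq)]
      · rw [if_neg hq]
        exact ite_nonneg (h.nonneg J) le_rfl
  · exact h.sum_mem_eq hp

theorem transfer_bijOn [IsTrans P lt] [IsStrictOrder P r] (hr : r ≤ lt)
    (hstar : ∀ J₁ J₂, IsLowerIdeal lt J₁ → IsLowerIdeal lt J₂ → IsLowerIdeal lt (starOp r J₁ J₂))
    (hmax : ∀ p ∈ Pstar, ∀ q, ¬ r p q) (hα : ∀ K, α K ≠ 0 → K ∈ idealsOn lt Pstar)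
    (hchain : IsChain (· ⊆ ·) (Function.support α)) :
    Set.BijOn (transfer r) (markedOrderPoints lt Pstar α)
      {x | (fun p ↦ (x p : ℝ)) ∈ RPPmarked lt r Pstar α} := by
  have hwf : WellFounded (flip r) := Finite.wellFounded_of_trans_of_irrefl (Function.swap r)
  refine ⟨fun y hy ↦ ?_, (transfer_injective hwf).injOn, fun x hx ↦ ?_⟩
  · exact (mem_RPPmarked_iff hα).mpr
      ⟨_, isVertexDecomposition_levelMultiplicity hy hr (fun K hK ↦ (hα K hK).1) hchain⟩
  · obtain ⟨b, hb⟩ := (mem_RPPmarked_iff hα).mp hx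
    obtain ⟨c, hc, hcchain⟩ := hb.exists_isChain_support hr hstar hmax
      (hchain.mono fun K ↦ Nat.cast_ne_zero.mp)
    have htransfer := transfer_sum_smul_ind hc.nonneg
      (fun J hJ ↦ (hc.isLowerIdeal J hJ).of_le hr) hcchain
    obtain ⟨y, hy, rfl⟩ := exists_int_transfer_eq hwf (htransfer.trans hc.sum_smul)
    exact ⟨y, hc.mem_markedOrderPoints hy, rfl⟩

end MarkedOrderPoints

theorem stmt16_general {P : Type*} [Fintype P] (lt lt' lt'' : P → P → Prop)
    (hlttr : ∀ a b c, lt a b → lt b c → lt a c)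
    (hlt'irr : ∀ p, ¬ lt' p p) (hlt'tr : ∀ a b c, lt' a b → lt' b c → lt' a c)
    (hlt''irr : ∀ p, ¬ lt'' p p) (hlt''tr : ∀ a b c, lt'' a b → lt'' b c → lt'' a c)
    (hweak' : ∀ p q, lt' p q → lt p q) (hweak'' : ∀ p q, lt'' p q → lt p q)
    (hstar' : ∀ J₁ J₂ : Set P, IsLowerIdeal lt J₁ → IsLowerIdeal lt J₂ →
      IsLowerIdeal lt (starOp lt' J₁ J₂))
    (hstar'' : ∀ J₁ J₂ : Set P, IsLowerIdeal lt J₁ → IsLowerIdeal lt J₂ →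
      IsLowerIdeal lt (starOp lt'' J₁ J₂))
    (Pstar : Set P) (hiii' : ∀ p ∈ Pstar, ∀ q : P, ¬ lt' p q)
    (hiii'' : ∀ p ∈ Pstar, ∀ q : P, ¬ lt'' p q) (α : Set P → ℕ)
    (hαsupp : ∀ K : Set P, α K ≠ 0 → K ∈ idealsOn lt Pstar)
    (hαchain : ∀ K₁ K₂ : Set P, α K₁ ≠ 0 → α K₂ ≠ 0 → K₁ ⊆ K₂ ∨ K₂ ⊆ K₁) (m : ℕ) :
    Nat.card {x : P → ℤ // (fun p ↦ (x p : ℝ)) ∈ dilate m (RPPmarked lt lt' Pstar α)} =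
    Nat.card {x : P → ℤ // (fun p ↦ (x p : ℝ)) ∈ dilate m (RPPmarked lt lt'' Pstar α)} := by
  have : IsTrans P lt := ⟨hlttr⟩
  have : IsStrictOrder P lt' := { irrefl := hlt'irr, trans := hlt'tr }
  have : IsStrictOrder P lt'' := { irrefl := hlt''irr, trans := hlt''tr }
  have hsupp : ∀ K, (m • α) K ≠ 0 → K ∈ idealsOn lt Pstar := fun K hK ↦
    hαsupp K (right_ne_zero_of_mul hK)
  have hchain : IsChain (· ⊆ ·) (Function.support (m • α)) := fun K₁ h₁ K₂ h₂ _ ↦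
    hαchain K₁ K₂ (right_ne_zero_of_mul h₁) (right_ne_zero_of_mul h₂)
  have hbij' := transfer_bijOn hweak' hstar' hiii' hsupp hchain
  have hbij'' := transfer_bijOn hweak'' hstar'' hiii'' hsupp hchain
  rw [dilate_RPPmarked, dilate_RPPmarked]
  exact Nat.card_congr (hbij'.equiv.symm.trans hbij''.equiv)

/-- If `lt'` and `lt''` are two partial orders weaker than `lt`, both satisfying the
closure and maximality conditions of the marked setup, then for every nonnegative dominant
marking `λ` (with decomposition coefficients `α`) and every `m ≥ 0`, the dilations
`m·R_λ(P, lt, lt')` and `m·R_λ(P, lt, lt'')` contain the same number of integer points. -/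
theorem stmt16 {P : Type*} [Fintype P] (lt lt' lt'' : P → P → Prop)
    (hltirr : ∀ p, ¬ lt p p) (hlttr : ∀ a b c, lt a b → lt b c → lt a c)
    (hlt'irr : ∀ p, ¬ lt' p p) (hlt'tr : ∀ a b c, lt' a b → lt' b c → lt' a c)
    (hlt''irr : ∀ p, ¬ lt'' p p) (hlt''tr : ∀ a b c, lt'' a b → lt'' b c → lt'' a c)
    (hweak' : ∀ p q, lt' p q → lt p q)
    (hweak'' : ∀ p q, lt'' p q → lt p q)
    (hstar' : ∀ J1 J2 : Set P, IsLowerIdeal lt J1 → IsLowerIdeal lt J2 →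
      IsLowerIdeal lt (starOp lt' J1 J2))
    (hstar'' : ∀ J1 J2 : Set P, IsLowerIdeal lt J1 → IsLowerIdeal lt J2 →
      IsLowerIdeal lt (starOp lt'' J1 J2))
    (Pstar : Set P)
    (hmin : ∀ p : P, (∀ q, ¬ lt q p) → p ∈ Pstar)
    (hmax : ∀ p : P, (∀ q, ¬ lt p q) → p ∈ Pstar)
    (hiii' : ∀ p ∈ Pstar, ∀ q : P, ¬ lt' p q)
    (hiii'' : ∀ p ∈ Pstar, ∀ q : P, ¬ lt'' p q)
    (lam : P → ℤ) (α : Set P → ℕ)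
    (hlamnn : ∀ p ∈ Pstar, 0 ≤ lam p)
    (hdom : ∀ p q : P, p ∈ Pstar → q ∈ Pstar → lt p q → lam q ≤ lam p)
    (hαsupp : ∀ K : Set P, α K ≠ 0 → K ∈ idealsOn lt Pstar ∧ K.Nonempty)
    (hαchain : ∀ K1 K2 : Set P, α K1 ≠ 0 → α K2 ≠ 0 → K1 ⊆ K2 ∨ K2 ⊆ K1)
    (hαsum : ∀ p ∈ Pstar, lam p =
      ∑ K ∈ (Set.toFinite (idealsOn lt Pstar)).toFinset, (α K : ℤ) * K.indicator 1 p)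
    (m : ℕ) :
    Nat.card {x : P → ℤ // (fun p => (x p : ℝ)) ∈ dilate m (RPPmarked lt lt' Pstar α)} =
    Nat.card {x : P → ℤ // (fun p => (x p : ℝ)) ∈ dilate m (RPPmarked lt lt'' Pstar α)} :=
  stmt16_general lt lt' lt'' hlttr hlt'irr hlt'tr hlt''irr hlt''tr hweak' hweak'' hstar' hstar''
    Pstar hiii' hiii'' α (fun K hK ↦ (hαsupp K hK).1) hαchain m
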